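/- arXiv:1705.01270 — 2 statements merged into one kernel-verified Lean document; each statement's English description precedes it below -/
import Mathlib

section
/- (Convexity of the spectral potential) For all φ, ψ ∈ L^∞(X, m) and every t ∈ [0, 1], one has λ((1 − t)φ + tψ) ≤ (1 − t)λ(φ) + tλ(ψ). -/
open MeasureTheory Filter
open scoped ENNReal NNReal

noncomputable section

/-- The Birkhoff sum `S_n φ (x) = φ(x) + φ(α x) + ⋯ + φ(α^{n-1} x)`. -/
def birkhoff {X : Type*} (α : X → X) (φ : X → ℝ) (n : ℕ) (x : X) : ℝ :=
  ∑ i ∈ Finset.range n, φ (α^[i] x)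

/-- Boundedness of the shift operator `A f = f ∘ α` on `L¹(X, m)`:
there is `C > 0` with `m (α⁻¹ G) ≤ C · m G` for all measurable `G`. -/
def ShiftBounded {X : Type*} [MeasurableSpace X] (m : Measure X) (α : X → X) : Prop :=
  ∃ C : ℝ≥0, 0 < C ∧ ∀ G : Set X, MeasurableSet G → m (α ⁻¹' G) ≤ (C : ℝ≥0∞) * m G

/-- The operator norm `‖(e^ψ A^s)^k‖` of the `k`-th power of the weighted shift operator
`e^ψ A^s` (with base shift `α^[s]`) acting on `L¹(X, m)`, computed as the supremum of
`‖(e^ψ A^s)^k f‖₁` over `f` with `‖f‖₁ = 1`. -/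
def weightedOpNorm {X : Type*} [MeasurableSpace X] (m : Measure X) (α : X → X) (s : ℕ)
    (ψ : X → ℝ) (k : ℕ) : ℝ :=
  sSup {r : ℝ | ∃ f : X → ℝ, Integrable f m ∧ (∫ x, |f x| ∂m) = 1 ∧
    r = ∫ x, Real.exp (∑ j ∈ Finset.range k, ψ (α^[s * j] x)) * |f (α^[s * k] x)| ∂m}

/-- `λ(ψ, A^s)`: the logarithm of the spectral radius of `e^ψ A^s` on `L¹(X, m)`. -/
def spectralPotentialBase {X : Type*} [MeasurableSpace X] (m : Measure X) (α : X → X)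
    (s : ℕ) (ψ : X → ℝ) : ℝ :=
  limUnder atTop fun k : ℕ => Real.log (weightedOpNorm m α s ψ k) / (k : ℝ)

/-- The spectral potential `λ(φ) = lim (1/n) ln ‖A_φⁿ‖`. -/
def spectralPotential {X : Type*} [MeasurableSpace X] (m : Measure X) (α : X → X)
    (φ : X → ℝ) : ℝ :=
  spectralPotentialBase m α 1 φ

/-- A functional on `L^∞(X, m)` is positive if it is nonnegative on nonnegative functions. -/
def IsPositiveFunctional {X : Type*} [MeasurableSpace X] (m : Measure X)
    (μ : Lp ℝ ⊤ m → ℝ) : Prop :=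
  ∀ φ : Lp ℝ ⊤ m, (0 : X → ℝ) ≤ᵐ[m] ⇑φ → 0 ≤ μ φ

/-- A functional on `L^∞(X, m)` is normalized if its value on the unit function is `1`. -/
def IsNormalizedFunctional {X : Type*} [MeasurableSpace X] (m : Measure X)
    (μ : Lp ℝ ⊤ m → ℝ) : Prop :=
  ∀ φ : Lp ℝ ⊤ m, ⇑φ =ᵐ[m] (fun _ => (1 : ℝ)) → μ φ = 1

/-- A functional `μ` on `L^∞(X, m)` is `α`-invariant if `μ[f ∘ α] = μ[f]`. -/
def IsInvariantFunctional {X : Type*} [MeasurableSpace X] (m : Measure X) (α : X → X)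
    (μ : Lp ℝ ⊤ m → ℝ) : Prop :=
  ∀ φ ψ : Lp ℝ ⊤ m, ⇑ψ =ᵐ[m] (fun x => φ (α x)) → μ ψ = μ φ

/-- `μ ∈ M_α(X, m)`: positive, normalized and `α`-invariant. -/
def MemMalpha {X : Type*} [MeasurableSpace X] (m : Measure X) (α : X → X)
    (μ : Lp ℝ ⊤ m → ℝ) : Prop :=
  IsPositiveFunctional m μ ∧ IsNormalizedFunctional m μ ∧ IsInvariantFunctional m α μ

/-- A measurable partition of unity on `X` made of nonnegative elements of `L^∞(X, m)`
summing to `1`. -/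
structure PartUnity {X : Type*} [MeasurableSpace X] (m : Measure X) where
  k : ℕ
  g : Fin k → Lp ℝ ⊤ m
  nonneg : ∀ i, (0 : X → ℝ) ≤ᵐ[m] ⇑(g i)
  sum_one : ∀ᵐ x ∂m, (∑ i, (g i : Lp ℝ ⊤ m) x) = 1

/-- The summand `a · ln (r / a)` with the conventions: it is `0` if `a = 0`, and `-∞` if
`a ≠ 0` and `r = 0`. -/
def entTerm (a r : ℝ) : EReal :=
  if a = 0 then 0 else if r = 0 then ⊥ else ((a * Real.log (r / a) : ℝ) : EReal)

/-- `τₙ(μ, D)`. -/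
def tauN {X : Type*} [MeasurableSpace X] (m : Measure X) (α : X → X)
    (μ : Lp ℝ ⊤ m → ℝ) (n : ℕ) (D : PartUnity m) : EReal :=
  sSup {r : EReal | ∃ f : X → ℝ, Integrable f m ∧ (∫ x, |f x| ∂m) = 1 ∧
    r = ∑ i, entTerm (μ (D.g i)) (∫ x, (D.g i : Lp ℝ ⊤ m) x * |f (α^[n] x)| ∂m)}

/-- The t-entropy `τ(μ) = inf_{n, D} τₙ(μ, D) / n`. -/
def tEntropy {X : Type*} [MeasurableSpace X] (m : Measure X) (α : X → X)
    (μ : Lp ℝ ⊤ m → ℝ) : EReal :=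
  ⨅ (n : ℕ) (_ : 0 < n) (D : PartUnity m), (((n : ℝ)⁻¹ : ℝ) : EReal) * tauN m α μ n D

/-- The t-entropy extended by `τ(μ) = -∞` outside `M_α(X, m)`. -/
def tEntropyExt {X : Type*} [MeasurableSpace X] (m : Measure X) (α : X → X)
    (μ : Lp ℝ ⊤ m → ℝ) : EReal :=
  @ite _ (MemMalpha m α μ) (Classical.dec _) (tEntropy m α μ) ⊥

/-!
The norm of `(e^φ A^s)^k` is the norm of the single weighted shift `e^{S_k φ} A^{sk}`, whose weight
is linear in `φ`. Hölder's inequality makes the norm of a weighted shift log-convex in its weight,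
so `ln ‖(e^φ A^s)^k‖` is convex in `φ` for each `k`, and the inequality survives division by `k`
and passage to the limit given by Fekete's lemma.

If `ln ‖(e^φ A^s)^k‖ / k` tends to `-∞`, or `(e^φ A^s)^k = 0` for some `k`, the real number
`spectralPotentialBase m α s φ` is a junk value. Since replacing `φ` by `ψ` changes the norms by at
most a factor `e^{k‖φ - ψ‖}`, each of these cases happens for every `φ` or for none, and the junk
value does not depend on `φ`.
-/

open scoped Topology

section Sequences

variable {u v w : ℕ → ℝ} {C D : ℝ}

theorem bddBelow_range_div_of_abs_sub_le (h : ∀ n, |u n - v n| ≤ n * C)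
    (hu : BddBelow (Set.range fun n => u n / n)) : BddBelow (Set.range fun n => v n / n) := by
  obtain ⟨c, hc⟩ := hu
  have hC : 0 ≤ C := by simpa using (abs_nonneg _).trans (h 1)
  refine ⟨c - C, Set.forall_mem_range.2 fun n => ?_⟩
  have hcn : c ≤ u n / n := hc ⟨n, rfl⟩
  have hdiff : (u n - v n) / n ≤ C :=
    div_le_of_le_mul₀ n.cast_nonneg hC (by linarith [le_of_abs_le (h n)])
  rw [sub_div] at hdiff
  linarith

theorem exists_tendsto_div_iff_bddBelow (hu : Subadditive u) :
    (∃ l, Tendsto (fun n => u n / n) atTop (𝓝 l)) ↔ BddBelow (Set.range fun n => u n / n) :=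
  ⟨fun ⟨_, hl⟩ => hl.bddBelow_range, fun hb => ⟨_, hu.tendsto_lim hb⟩⟩

theorem exists_tendsto_div_iff_of_abs_sub_le (hu : Subadditive u) (hv : Subadditive v)
    (h : ∀ n, |u n - v n| ≤ n * C) :
    (∃ l, Tendsto (fun n => u n / n) atTop (𝓝 l)) ↔
      ∃ l, Tendsto (fun n => v n / n) atTop (𝓝 l) := by
  rw [exists_tendsto_div_iff_bddBelow hu, exists_tendsto_div_iff_bddBelow hv]
  exact ⟨bddBelow_range_div_of_abs_sub_le h,
    bddBelow_range_div_of_abs_sub_le fun n => abs_sub_comm (u n) (v n) ▸ h n⟩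

theorem limUnder_div_le_of_subadditive (hu : Subadditive u) (hv : Subadditive v)
    (hw : Subadditive w) (huv : ∀ n, |u n - v n| ≤ n * C) (huw : ∀ n, |u n - w n| ≤ n * D)
    {a b : ℝ} (hab : a + b = 1) (h : ∀ n, w n ≤ a * u n + b * v n) :
    limUnder atTop (fun n => w n / n) ≤
      a * limUnder atTop (fun n => u n / n) + b * limUnder atTop (fun n => v n / n) := by
  have hv_iff := exists_tendsto_div_iff_of_abs_sub_le hu hv huv
  have hw_iff := exists_tendsto_div_iff_of_abs_sub_le hu hw huw
  by_cases hlim : ∃ l, Tendsto (fun n => u n / n) atTop (𝓝 l)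
  · refine le_of_tendsto_of_tendsto' (tendsto_nhds_limUnder (hw_iff.1 hlim))
      (((tendsto_nhds_limUnder hlim).const_mul a).add
        ((tendsto_nhds_limUnder (hv_iff.1 hlim)).const_mul b)) fun n => ?_
    rw [← mul_div_assoc, ← mul_div_assoc, ← add_div]
    exact div_le_div_of_nonneg_right (h n) n.cast_nonneg
  · rw [limUnder_of_not_tendsto hlim, limUnder_of_not_tendsto (hv_iff.not.1 hlim),
      limUnder_of_not_tendsto (hw_iff.not.1 hlim), ← add_mul, hab, one_mul]

end Sequences

theorem birkhoffSum_smul_add_smul {X R M : Type*} [Semiring R] [AddCommMonoid M] [Module R M]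
    (T : X → X) (f g : X → M) (a b : R) (n : ℕ) :
    birkhoffSum T (a • f + b • g) n = a • birkhoffSum T f n + b • birkhoffSum T g n := by
  ext x
  simp [birkhoffSum, Finset.sum_add_distrib, Finset.smul_sum]

section SpectralPotential

variable {X : Type*} [MeasurableSpace X] {m : Measure X}

theorem integral_rpow_mul_rpow_le {f g : X → ℝ} (hf : Integrable f m) (hg : Integrable g m)
    (hf0 : 0 ≤ᵐ[m] f) (hg0 : 0 ≤ᵐ[m] g) {a b : ℝ} (ha : 0 ≤ a) (hb : 0 ≤ b) (hab : a + b = 1) :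
    ∫ x, f x ^ a * g x ^ b ∂m ≤ (∫ x, f x ∂m) ^ a * (∫ x, g x ∂m) ^ b := by
  have hfg0 : 0 ≤ᵐ[m] fun x => f x ^ a * g x ^ b := by
    filter_upwards [hf0, hg0] with x hfx hgx
    exact mul_nonneg (Real.rpow_nonneg hfx a) (Real.rpow_nonneg hgx b)
  have hfg : AEStronglyMeasurable (fun x => f x ^ a * g x ^ b) m :=
    ((hf.aemeasurable.pow_const a).mul (hg.aemeasurable.pow_const b)).aestronglyMeasurable
  have hofReal : ∫⁻ x, ENNReal.ofReal (f x ^ a * g x ^ b) ∂m =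
      ∫⁻ x, ENNReal.ofReal (f x) ^ a * ENNReal.ofReal (g x) ^ b ∂m := by
    refine lintegral_congr_ae ?_
    filter_upwards [hf0, hg0] with x hfx hgx
    rw [ENNReal.ofReal_mul (Real.rpow_nonneg hfx a), ENNReal.ofReal_rpow_of_nonneg hfx ha,
      ENNReal.ofReal_rpow_of_nonneg hgx hb]
  rw [integral_eq_lintegral_of_nonneg_ae hfg0 hfg, hofReal,
    integral_eq_lintegral_of_nonneg_ae hf0 hf.aestronglyMeasurable,
    integral_eq_lintegral_of_nonneg_ae hg0 hg.aestronglyMeasurable,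
    ENNReal.toReal_rpow, ENNReal.toReal_rpow, ← ENNReal.toReal_mul]
  refine ENNReal.toReal_mono (ENNReal.mul_ne_top ?_ ?_)
    (ENNReal.lintegral_mul_norm_pow_le hf.aemeasurable.ennreal_ofReal
      hg.aemeasurable.ennreal_ofReal ha hb hab)
  · exact ENNReal.rpow_ne_top_of_nonneg ha hf.lintegral_lt_top.ne
  · exact ENNReal.rpow_ne_top_of_nonneg hb hg.lintegral_lt_top.ne

namespace ShiftBounded

variable {S T : X → X}

theorem map_le_smul (hT : Measurable T) (hbdd : ShiftBounded m T) :
    ∃ C : ℝ≥0, m.map T ≤ C • m := by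
  obtain ⟨C, -, hC⟩ := hbdd
  refine ⟨C, Measure.le_iff.2 fun G hG => ?_⟩
  rw [Measure.map_apply hT hG]
  exact hC G hG

theorem quasiMeasurePreserving (hT : Measurable T) (hbdd : ShiftBounded m T) :
    Measure.QuasiMeasurePreserving T m m := by
  obtain ⟨C, hC⟩ := hbdd.map_le_smul hT
  exact ⟨hT, hC.absolutelyContinuous.trans Measure.smul_absolutelyContinuous⟩

protected theorem id : ShiftBounded m id :=
  ⟨1, one_pos, fun G _ => by simp⟩

protected theorem comp (hS : Measurable S) (hbS : ShiftBounded m S) (hbT : ShiftBounded m T) :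
    ShiftBounded m (S ∘ T) := by
  obtain ⟨C, hC0, hC⟩ := hbS
  obtain ⟨D, hD0, hD⟩ := hbT
  refine ⟨D * C, mul_pos hD0 hC0, fun G hG => ?_⟩
  calc m (S ∘ T ⁻¹' G) ≤ D * m (S ⁻¹' G) := hD _ (hS hG)
    _ ≤ D * (C * m G) := by gcongr; exact hC G hG
    _ = ↑(D * C) * m G := by rw [ENNReal.coe_mul, mul_assoc]

protected theorem iterate (hT : Measurable T) (hbdd : ShiftBounded m T) (n : ℕ) :
    ShiftBounded m T^[n] := by
  induction n with
  | zero => exact .id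
  | succ n ih => exact Function.iterate_succ T n ▸ .comp (hT.iterate n) ih hbdd

theorem memLp_comp {E : Type*} [NormedAddCommGroup E] (hT : Measurable T) (hbdd : ShiftBounded m T)
    {p : ℝ≥0∞} {f : X → E} (hf : MemLp f p m) : MemLp (f ∘ T) p m := by
  obtain ⟨C, hC⟩ := hbdd.map_le_smul hT
  exact (hf.of_measure_le_smul ENNReal.coe_ne_top hC).comp_of_map hT.aemeasurable

theorem integrable_comp {E : Type*} [NormedAddCommGroup E] (hT : Measurable T)
    (hbdd : ShiftBounded m T) {f : X → E} (hf : Integrable f m) :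
    Integrable (fun x => f (T x)) m :=
  memLp_one_iff_integrable.1 (hbdd.memLp_comp hT (memLp_one_iff_integrable.2 hf))

theorem exists_integral_norm_comp_le (E : Type*) [NormedAddCommGroup E] (hT : Measurable T)
    (hbdd : ShiftBounded m T) :
    ∃ C : ℝ≥0, ∀ f : X → E, Integrable f m → ∫ x, ‖f (T x)‖ ∂m ≤ C * ∫ x, ‖f x‖ ∂m := by
  obtain ⟨C, hC⟩ := hbdd.map_le_smul hT
  refine ⟨C, fun f hf => ?_⟩
  have hfC : Integrable f (C • m) := hf.smul_measure_nnreal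
  calc ∫ x, ‖f (T x)‖ ∂m = ∫ y, ‖f y‖ ∂m.map T :=
        (integral_map hT.aemeasurable (hfC.mono_measure hC).norm.aestronglyMeasurable).symm
    _ ≤ ∫ y, ‖f y‖ ∂(C • m) :=
        integral_mono_measure hC (Eventually.of_forall fun _ => norm_nonneg _) hfC.norm
    _ = C * ∫ y, ‖f y‖ ∂m := integral_smul_nnreal_measure _ C

end ShiftBounded

section WeightedShift

variable {T T₁ T₂ : X → X} {w w₁ w₂ : X → ℝ}

/-- The norm on `L¹(X, m)` of the weighted shift `f ↦ e^w · (f ∘ T)`, as the supremum of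
`‖e^w · (f ∘ T)‖₁` over `‖f‖₁ = 1`. It is meaningful only when the operator is bounded, and is
`0` when `L¹(X, m)` is trivial. -/
def weightedShiftNorm (m : Measure X) (T : X → X) (w : X → ℝ) : ℝ :=
  sSup {r : ℝ | ∃ f : X → ℝ, Integrable f m ∧ (∫ x, |f x| ∂m) = 1 ∧
    r = ∫ x, Real.exp (w x) * |f (T x)| ∂m}

theorem weightedShiftNorm_nonneg : 0 ≤ weightedShiftNorm m T w := by
  refine Real.sSup_nonneg ?_
  rintro _ ⟨f, -, -, rfl⟩
  exact integral_nonneg fun x => by positivity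

theorem weightedShiftNorm_le {B : ℝ} (hB : 0 ≤ B)
    (h : ∀ f : X → ℝ, Integrable f m → ∫ x, |f x| ∂m = 1 →
      ∫ x, Real.exp (w x) * |f (T x)| ∂m ≤ B) :
    weightedShiftNorm m T w ≤ B := by
  refine Real.sSup_le ?_ hB
  rintro _ ⟨f, hf, hf1, rfl⟩
  exact h f hf hf1

theorem ae_exp_le_exp_lpNorm (hw : MemLp w ∞ m) :
    ∀ᵐ x ∂m, Real.exp (w x) ≤ Real.exp (lpNorm w ∞ m) := by
  filter_upwards [ae_le_lpNorm_exponent_top hw] with x hx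
  exact Real.exp_le_exp.2 (le_of_abs_le hx)

theorem integrable_exp_mul_abs_comp (hT : Measurable T) (hbdd : ShiftBounded m T)
    (hw : MemLp w ∞ m) {f : X → ℝ} (hf : Integrable f m) :
    Integrable (fun x => Real.exp (w x) * |f (T x)|) m := by
  refine (hbdd.integrable_comp hT hf.abs).bdd_mul (c := Real.exp (lpNorm w ∞ m))
    (Real.continuous_exp.comp_aestronglyMeasurable hw.aestronglyMeasurable) ?_
  simpa only [Real.norm_eq_abs, Real.abs_exp] using ae_exp_le_exp_lpNorm hw

theorem exists_integral_exp_mul_abs_comp_le (hT : Measurable T) (hbdd : ShiftBounded m T)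
    (hw : MemLp w ∞ m) :
    ∃ K, ∀ f : X → ℝ, Integrable f m →
      ∫ x, Real.exp (w x) * |f (T x)| ∂m ≤ K * ∫ x, |f x| ∂m := by
  obtain ⟨C, hC⟩ := hbdd.exists_integral_norm_comp_le ℝ hT
  refine ⟨Real.exp (lpNorm w ∞ m) * C, fun f hf => ?_⟩
  calc ∫ x, Real.exp (w x) * |f (T x)| ∂m
      ≤ ∫ x, Real.exp (lpNorm w ∞ m) * |f (T x)| ∂m := by
        refine integral_mono_ae (integrable_exp_mul_abs_comp hT hbdd hw hf)
          ((hbdd.integrable_comp hT hf.abs).const_mul _) ?_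
        filter_upwards [ae_exp_le_exp_lpNorm hw] with x hx
        gcongr
    _ = Real.exp (lpNorm w ∞ m) * ∫ x, |f (T x)| ∂m := integral_const_mul _ _
    _ ≤ Real.exp (lpNorm w ∞ m) * (C * ∫ x, |f x| ∂m) := by gcongr; exact hC f hf
    _ = Real.exp (lpNorm w ∞ m) * C * ∫ x, |f x| ∂m := (mul_assoc _ _ _).symm

theorem integral_exp_mul_abs_comp_le_of_integral_eq_one (hT : Measurable T)
    (hbdd : ShiftBounded m T) (hw : MemLp w ∞ m) {f : X → ℝ} (hf : Integrable f m)
    (hf1 : ∫ x, |f x| ∂m = 1) :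
    ∫ x, Real.exp (w x) * |f (T x)| ∂m ≤ weightedShiftNorm m T w := by
  obtain ⟨K, hK⟩ := exists_integral_exp_mul_abs_comp_le hT hbdd hw
  refine le_csSup ⟨K, ?_⟩ ⟨f, hf, hf1, rfl⟩
  rintro _ ⟨g, hg, hg1, rfl⟩
  simpa only [hg1, mul_one] using hK g hg

theorem integral_exp_mul_abs_comp_le (hT : Measurable T) (hbdd : ShiftBounded m T)
    (hw : MemLp w ∞ m) {f : X → ℝ} (hf : Integrable f m) :
    ∫ x, Real.exp (w x) * |f (T x)| ∂m ≤ weightedShiftNorm m T w * ∫ x, |f x| ∂m := by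
  obtain hI | hI := (integral_nonneg fun x => abs_nonneg (f x) : 0 ≤ ∫ x, |f x| ∂m).eq_or_lt
  · obtain ⟨K, hK⟩ := exists_integral_exp_mul_abs_comp_le hT hbdd hw
    simpa only [← hI, mul_zero] using hK f hf
  · set I := ∫ x, |f x| ∂m
    have habs (x : X) : |I⁻¹ * f x| = I⁻¹ * |f x| := by rw [abs_mul, abs_of_pos (inv_pos.2 hI)]
    have hnormalized := integral_exp_mul_abs_comp_le_of_integral_eq_one hT hbdd hw
      (hf.const_mul I⁻¹) (by simp only [habs, integral_const_mul]; exact inv_mul_cancel₀ hI.ne')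
    simp only [habs, mul_left_comm _ I⁻¹, integral_const_mul] at hnormalized
    rwa [inv_mul_le_iff₀ hI, mul_comm] at hnormalized

theorem weightedShiftNorm_comp_le (hT₁ : Measurable T₁) (hb₁ : ShiftBounded m T₁)
    (hw₁ : MemLp w₁ ∞ m) (hT₂ : Measurable T₂) (hb₂ : ShiftBounded m T₂) (hw₂ : MemLp w₂ ∞ m) :
    weightedShiftNorm m (T₂ ∘ T₁) (fun x => w₁ x + w₂ (T₁ x)) ≤
      weightedShiftNorm m T₁ w₁ * weightedShiftNorm m T₂ w₂ := by
  refine weightedShiftNorm_le (mul_nonneg weightedShiftNorm_nonneg weightedShiftNorm_nonneg)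
    fun f hf hf1 => ?_
  set g : X → ℝ := fun x => Real.exp (w₂ x) * |f (T₂ x)|
  have habs (x : X) : |g x| = g x := abs_of_nonneg (by positivity)
  calc ∫ x, Real.exp (w₁ x + w₂ (T₁ x)) * |f ((T₂ ∘ T₁) x)| ∂m
      = ∫ x, Real.exp (w₁ x) * |g (T₁ x)| ∂m := by
        simp only [habs, g, Real.exp_add, mul_assoc, Function.comp_apply]
    _ ≤ weightedShiftNorm m T₁ w₁ * ∫ x, |g x| ∂m :=
        integral_exp_mul_abs_comp_le hT₁ hb₁ hw₁ (integrable_exp_mul_abs_comp hT₂ hb₂ hw₂ hf)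
    _ ≤ weightedShiftNorm m T₁ w₁ * weightedShiftNorm m T₂ w₂ := by
        simp only [habs]
        exact mul_le_mul_of_nonneg_left
          (integral_exp_mul_abs_comp_le_of_integral_eq_one hT₂ hb₂ hw₂ hf hf1)
          weightedShiftNorm_nonneg

theorem weightedShiftNorm_le_exp_mul (hT : Measurable T) (hbdd : ShiftBounded m T)
    (hw₁ : MemLp w₁ ∞ m) (hw₂ : MemLp w₂ ∞ m) {C : ℝ} (h : ∀ᵐ x ∂m, w₁ x ≤ C + w₂ x) :
    weightedShiftNorm m T w₁ ≤ Real.exp C * weightedShiftNorm m T w₂ := by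
  refine weightedShiftNorm_le (mul_nonneg (Real.exp_nonneg C) weightedShiftNorm_nonneg)
    fun f hf hf1 => ?_
  calc ∫ x, Real.exp (w₁ x) * |f (T x)| ∂m
      ≤ ∫ x, Real.exp C * (Real.exp (w₂ x) * |f (T x)|) ∂m := by
        refine integral_mono_ae (integrable_exp_mul_abs_comp hT hbdd hw₁ hf)
          ((integrable_exp_mul_abs_comp hT hbdd hw₂ hf).const_mul _) ?_
        filter_upwards [h] with x hx
        rw [← mul_assoc, ← Real.exp_add]
        gcongr
    _ = Real.exp C * ∫ x, Real.exp (w₂ x) * |f (T x)| ∂m := integral_const_mul _ _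
    _ ≤ Real.exp C * weightedShiftNorm m T w₂ := by
        gcongr
        exact integral_exp_mul_abs_comp_le_of_integral_eq_one hT hbdd hw₂ hf hf1

theorem weightedShiftNorm_smul_add_smul_le (hT : Measurable T) (hbdd : ShiftBounded m T)
    (hw₁ : MemLp w₁ ∞ m) (hw₂ : MemLp w₂ ∞ m) {a b : ℝ} (ha : 0 ≤ a) (hb : 0 ≤ b)
    (hab : a + b = 1) :
    weightedShiftNorm m T (a • w₁ + b • w₂) ≤
      weightedShiftNorm m T w₁ ^ a * weightedShiftNorm m T w₂ ^ b := by
  refine weightedShiftNorm_le (mul_nonneg (Real.rpow_nonneg weightedShiftNorm_nonneg a)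
    (Real.rpow_nonneg weightedShiftNorm_nonneg b)) fun f hf hf1 => ?_
  set g₁ : X → ℝ := fun x => Real.exp (w₁ x) * |f (T x)|
  set g₂ : X → ℝ := fun x => Real.exp (w₂ x) * |f (T x)|
  have hg₁ : ∀ x, 0 ≤ g₁ x := fun x => by positivity
  have hg₂ : ∀ x, 0 ≤ g₂ x := fun x => by positivity
  have hsplit (x : X) :
      Real.exp (a * w₁ x + b * w₂ x) * |f (T x)| = g₁ x ^ a * g₂ x ^ b := by
    have hf_split : |f (T x)| = |f (T x)| ^ a * |f (T x)| ^ b := by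
      rw [← Real.rpow_add_of_nonneg (abs_nonneg _) ha hb, hab, Real.rpow_one]
    rw [Real.mul_rpow (Real.exp_nonneg _) (abs_nonneg _),
      Real.mul_rpow (Real.exp_nonneg _) (abs_nonneg _), mul_mul_mul_comm, ← hf_split,
      ← Real.exp_mul, ← Real.exp_mul, ← Real.exp_add, mul_comm a, mul_comm b]
  calc ∫ x, Real.exp (a * w₁ x + b * w₂ x) * |f (T x)| ∂m
      = ∫ x, g₁ x ^ a * g₂ x ^ b ∂m := by simp only [hsplit]
    _ ≤ (∫ x, g₁ x ∂m) ^ a * (∫ x, g₂ x ∂m) ^ b :=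
        integral_rpow_mul_rpow_le (integrable_exp_mul_abs_comp hT hbdd hw₁ hf)
          (integrable_exp_mul_abs_comp hT hbdd hw₂ hf) (Eventually.of_forall hg₁)
          (Eventually.of_forall hg₂) ha hb hab
    _ ≤ weightedShiftNorm m T w₁ ^ a * weightedShiftNorm m T w₂ ^ b := by
        have hle₁ := integral_exp_mul_abs_comp_le_of_integral_eq_one hT hbdd hw₁ hf hf1
        have hle₂ := integral_exp_mul_abs_comp_le_of_integral_eq_one hT hbdd hw₂ hf hf1
        exact mul_le_mul (Real.rpow_le_rpow (integral_nonneg hg₁) hle₁ ha)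
          (Real.rpow_le_rpow (integral_nonneg hg₂) hle₂ hb)
          (Real.rpow_nonneg (integral_nonneg hg₂) b)
          (Real.rpow_nonneg weightedShiftNorm_nonneg a)

end WeightedShift

section BirkhoffSum

variable {T : X → X}

theorem memLp_birkhoffSum {E : Type*} [NormedAddCommGroup E] {p : ℝ≥0∞} {f : X → E}
    (hT : Measurable T) (hbdd : ShiftBounded m T) (hf : MemLp f p m) (n : ℕ) :
    MemLp (birkhoffSum T f n) p m :=
  memLp_finsetSum _ fun i _ => (hbdd.iterate hT i).memLp_comp (hT.iterate i) hf

theorem ae_birkhoffSum_le {φ : X → ℝ} (hT : Measure.QuasiMeasurePreserving T m m) {C : ℝ}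
    (h : ∀ᵐ x ∂m, φ x ≤ C) (n : ℕ) : ∀ᵐ x ∂m, birkhoffSum T φ n x ≤ n * C := by
  filter_upwards [ae_all_iff.2 fun i => (hT.iterate i).ae h] with x hx
  simpa [birkhoffSum] using Finset.sum_le_card_nsmul (Finset.range n) _ C fun i _ => hx i

end BirkhoffSum

section WeightedOpNorm

variable {α : X → X} {s : ℕ} {φ ψ : X → ℝ}

theorem weightedOpNorm_eq_weightedShiftNorm (α : X → X) (s : ℕ) (φ : X → ℝ) (k : ℕ) :
    weightedOpNorm m α s φ k = weightedShiftNorm m (α^[s])^[k] (birkhoffSum α^[s] φ k) := by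
  simp only [weightedOpNorm, weightedShiftNorm, birkhoffSum, Function.iterate_mul]

theorem weightedOpNorm_nonneg (k : ℕ) : 0 ≤ weightedOpNorm m α s φ k :=
  weightedOpNorm_eq_weightedShiftNorm α s φ k ▸ weightedShiftNorm_nonneg

theorem weightedOpNorm_add_le (hα : Measurable α) (hbdd : ShiftBounded m α) (hφ : MemLp φ ∞ m)
    (k l : ℕ) :
    weightedOpNorm m α s φ (k + l) ≤ weightedOpNorm m α s φ k * weightedOpNorm m α s φ l := by
  have hs := hα.iterate s
  have hbs := hbdd.iterate hα s
  simp only [weightedOpNorm_eq_weightedShiftNorm, funext (birkhoffSum_add α^[s] φ k l)]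
  rw [add_comm k l, Function.iterate_add]
  exact weightedShiftNorm_comp_le (hs.iterate k) (hbs.iterate hs k)
    (memLp_birkhoffSum hs hbs hφ k) (hs.iterate l) (hbs.iterate hs l)
    (memLp_birkhoffSum hs hbs hφ l)

theorem weightedOpNorm_le_exp_mul (hα : Measurable α) (hbdd : ShiftBounded m α)
    (hφ : MemLp φ ∞ m) (hψ : MemLp ψ ∞ m) (k : ℕ) :
    weightedOpNorm m α s φ k ≤
      Real.exp (k * lpNorm (φ - ψ) ∞ m) * weightedOpNorm m α s ψ k := by
  have hs := hα.iterate s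
  have hbs := hbdd.iterate hα s
  simp only [weightedOpNorm_eq_weightedShiftNorm]
  refine weightedShiftNorm_le_exp_mul (hs.iterate k) (hbs.iterate hs k)
    (memLp_birkhoffSum hs hbs hφ k) (memLp_birkhoffSum hs hbs hψ k) ?_
  have hdiff : ∀ᵐ x ∂m, (φ - ψ) x ≤ lpNorm (φ - ψ) ∞ m := by
    filter_upwards [ae_le_lpNorm_exponent_top (hφ.sub hψ)] with x hx using le_of_abs_le hx
  filter_upwards [ae_birkhoffSum_le (hbs.quasiMeasurePreserving hs) hdiff k] with x hx
  rw [birkhoffSum_sub] at hx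
  linarith

theorem weightedOpNorm_smul_add_smul_le (hα : Measurable α) (hbdd : ShiftBounded m α)
    (hφ : MemLp φ ∞ m) (hψ : MemLp ψ ∞ m) {a b : ℝ} (ha : 0 ≤ a) (hb : 0 ≤ b) (hab : a + b = 1)
    (k : ℕ) :
    weightedOpNorm m α s (a • φ + b • ψ) k ≤
      weightedOpNorm m α s φ k ^ a * weightedOpNorm m α s ψ k ^ b := by
  have hs := hα.iterate s
  have hbs := hbdd.iterate hα s
  simp only [weightedOpNorm_eq_weightedShiftNorm, birkhoffSum_smul_add_smul]
  exact weightedShiftNorm_smul_add_smul_le (hs.iterate k) (hbs.iterate hs k)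
    (memLp_birkhoffSum hs hbs hφ k) (memLp_birkhoffSum hs hbs hψ k) ha hb hab

theorem weightedOpNorm_eq_zero_iff (hα : Measurable α) (hbdd : ShiftBounded m α)
    (hφ : MemLp φ ∞ m) (hψ : MemLp ψ ∞ m) {k : ℕ} :
    weightedOpNorm m α s φ k = 0 ↔ weightedOpNorm m α s ψ k = 0 := by
  suffices ∀ {φ ψ : X → ℝ}, MemLp φ ∞ m → MemLp ψ ∞ m → weightedOpNorm m α s φ k = 0 →
      weightedOpNorm m α s ψ k = 0 from ⟨this hφ hψ, this hψ hφ⟩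
  intro φ ψ hφ hψ h0
  exact le_antisymm ((weightedOpNorm_le_exp_mul hα hbdd hψ hφ k).trans_eq (by rw [h0, mul_zero]))
    (weightedOpNorm_nonneg k)

theorem log_weightedOpNorm_le (hα : Measurable α) (hbdd : ShiftBounded m α)
    (hφ : MemLp φ ∞ m) (hψ : MemLp ψ ∞ m) {k : ℕ} (h0 : weightedOpNorm m α s φ k ≠ 0) :
    Real.log (weightedOpNorm m α s φ k) ≤
      k * lpNorm (φ - ψ) ∞ m + Real.log (weightedOpNorm m α s ψ k) := by
  have hψ0 : weightedOpNorm m α s ψ k ≠ 0 := (weightedOpNorm_eq_zero_iff hα hbdd hφ hψ).not.1 h0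
  calc Real.log (weightedOpNorm m α s φ k)
      ≤ Real.log (Real.exp (k * lpNorm (φ - ψ) ∞ m) * weightedOpNorm m α s ψ k) :=
        Real.log_le_log ((weightedOpNorm_nonneg k).lt_of_ne' h0)
          (weightedOpNorm_le_exp_mul hα hbdd hφ hψ k)
    _ = k * lpNorm (φ - ψ) ∞ m + Real.log (weightedOpNorm m α s ψ k) := by
        rw [Real.log_mul (Real.exp_ne_zero _) hψ0, Real.log_exp]

theorem abs_log_weightedOpNorm_sub_le (hα : Measurable α) (hbdd : ShiftBounded m α)
    (hφ : MemLp φ ∞ m) (hψ : MemLp ψ ∞ m) {k : ℕ} (h0 : weightedOpNorm m α s φ k ≠ 0) :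
    |Real.log (weightedOpNorm m α s φ k) - Real.log (weightedOpNorm m α s ψ k)| ≤
      k * lpNorm (φ - ψ) ∞ m := by
  have hψ0 : weightedOpNorm m α s ψ k ≠ 0 := (weightedOpNorm_eq_zero_iff hα hbdd hφ hψ).not.1 h0
  refine abs_sub_le_iff.2 ⟨sub_le_iff_le_add.2 (log_weightedOpNorm_le hα hbdd hφ hψ h0),
    sub_le_iff_le_add.2 ?_⟩
  rw [lpNorm_sub_comm φ ψ]
  exact log_weightedOpNorm_le hα hbdd hψ hφ hψ0

theorem log_weightedOpNorm_smul_add_smul_le (hα : Measurable α) (hbdd : ShiftBounded m α)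
    (hφ : MemLp φ ∞ m) (hψ : MemLp ψ ∞ m) {a b : ℝ} (ha : 0 ≤ a) (hb : 0 ≤ b) (hab : a + b = 1)
    {k : ℕ} (h0 : weightedOpNorm m α s φ k ≠ 0) :
    Real.log (weightedOpNorm m α s (a • φ + b • ψ) k) ≤
      a * Real.log (weightedOpNorm m α s φ k) + b * Real.log (weightedOpNorm m α s ψ k) := by
  have hχ : MemLp (a • φ + b • ψ) ∞ m := (hφ.const_smul a).add (hψ.const_smul b)
  have pos {χ : X → ℝ} (hχ : MemLp χ ∞ m) : 0 < weightedOpNorm m α s χ k :=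
    (weightedOpNorm_nonneg k).lt_of_ne' ((weightedOpNorm_eq_zero_iff hα hbdd hφ hχ).not.1 h0)
  calc Real.log (weightedOpNorm m α s (a • φ + b • ψ) k)
      ≤ Real.log (weightedOpNorm m α s φ k ^ a * weightedOpNorm m α s ψ k ^ b) :=
        Real.log_le_log (pos hχ) (weightedOpNorm_smul_add_smul_le hα hbdd hφ hψ ha hb hab k)
    _ = a * Real.log (weightedOpNorm m α s φ k) + b * Real.log (weightedOpNorm m α s ψ k) := by
        rw [Real.log_mul (Real.rpow_pos_of_pos (pos hφ) a).ne'
          (Real.rpow_pos_of_pos (pos hψ) b).ne', Real.log_rpow (pos hφ), Real.log_rpow (pos hψ)]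

theorem subadditive_log_weightedOpNorm (hα : Measurable α) (hbdd : ShiftBounded m α)
    (hφ : MemLp φ ∞ m) (h0 : ∀ k, weightedOpNorm m α s φ k ≠ 0) :
    Subadditive fun k => Real.log (weightedOpNorm m α s φ k) := fun k l => by
  rw [← Real.log_mul (h0 k) (h0 l)]
  exact Real.log_le_log ((weightedOpNorm_nonneg _).lt_of_ne' (h0 _))
    (weightedOpNorm_add_le hα hbdd hφ k l)

theorem spectralPotentialBase_eq_zero_of_weightedOpNorm_eq_zero (hα : Measurable α)
    (hbdd : ShiftBounded m α) (hφ : MemLp φ ∞ m) {k : ℕ} (hk : weightedOpNorm m α s φ k = 0) :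
    spectralPotentialBase m α s φ = 0 := by
  refine (tendsto_const_nhds.congr' ?_).limUnder_eq
  filter_upwards [eventually_ge_atTop k] with n hn
  obtain ⟨l, rfl⟩ := Nat.exists_eq_add_of_le hn
  have hkl : weightedOpNorm m α s φ (k + l) = 0 :=
    le_antisymm ((weightedOpNorm_add_le hα hbdd hφ k l).trans_eq (by rw [hk, zero_mul]))
      (weightedOpNorm_nonneg _)
  rw [hkl, Real.log_zero, zero_div]

end WeightedOpNorm

theorem spectralPotential_convex_general {α : X → X} (hα : Measurable α)
    (hbdd : ShiftBounded m α) (s : ℕ) :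
    ConvexOn ℝ {φ : X → ℝ | MemLp φ ∞ m} (spectralPotentialBase m α s) := by
  have hconvex : Convex ℝ {φ : X → ℝ | MemLp φ ∞ m} := fun φ hφ ψ hψ a b _ _ _ =>
    (hφ.const_smul a).add (hψ.const_smul b)
  refine ⟨hconvex, fun φ hφ ψ hψ a b ha hb hab => ?_⟩
  have hχ : MemLp (a • φ + b • ψ) ∞ m := hconvex hφ hψ ha hb hab
  by_cases hnil : ∃ k, weightedOpNorm m α s φ k = 0
  · obtain ⟨k, hk⟩ := hnil
    have hzero {χ : X → ℝ} (hχ : MemLp χ ∞ m) : spectralPotentialBase m α s χ = 0 :=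
      spectralPotentialBase_eq_zero_of_weightedOpNorm_eq_zero hα hbdd hχ
        ((weightedOpNorm_eq_zero_iff hα hbdd hφ hχ).1 hk)
    simp [hzero hφ, hzero hψ, hzero hχ]
  · have h0 {χ : X → ℝ} (hχ : MemLp χ ∞ m) (k : ℕ) : weightedOpNorm m α s χ k ≠ 0 :=
      (weightedOpNorm_eq_zero_iff hα hbdd hφ hχ).not.1 (not_exists.1 hnil k)
    exact limUnder_div_le_of_subadditive (subadditive_log_weightedOpNorm hα hbdd hφ (h0 hφ))
      (subadditive_log_weightedOpNorm hα hbdd hψ (h0 hψ))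
      (subadditive_log_weightedOpNorm hα hbdd hχ (h0 hχ))
      (fun k => abs_log_weightedOpNorm_sub_le hα hbdd hφ hψ (h0 hφ k))
      (fun k => abs_log_weightedOpNorm_sub_le hα hbdd hφ hχ (h0 hφ k)) hab
      fun k => log_weightedOpNorm_smul_add_smul_le hα hbdd hφ hψ ha hb hab (h0 hφ k)

end SpectralPotential

/-- **Lemma 6 d)** (convexity): `λ((1−t)φ + tψ) ≤ (1−t)λ(φ) + tλ(ψ)` for `t ∈ [0, 1]`. -/
theorem spectralPotential_convex
    {X : Type*} [MeasurableSpace X] (m : Measure X) (α : X → X)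
    (hα : Measurable α) (hbdd : ShiftBounded m α)
    (φ ψ : Lp ℝ ⊤ m) (t : ℝ) (ht0 : 0 ≤ t) (ht1 : t ≤ 1) :
    spectralPotential m α (fun x => (1 - t) * φ x + t * ψ x) ≤
      (1 - t) * spectralPotential m α (⇑φ) + t * spectralPotential m α (⇑ψ) := by
  exact (spectralPotential_convex_general hα hbdd 1).2 (Lp.memLp φ) (Lp.memLp ψ)
    (sub_nonneg.2 ht1) ht0 (sub_add_cancel 1 t)

end
end

section
/- Let B(X, 𝔄) denote the Banach space of bounded measurable functions on X with the supremum norm, and let λ and τ be defined on B(X, 𝔄) and its continuous dual by the same formulae as on L^∞(X, m). If μ is a continuous linear functional on B(X, 𝔄) that does not factor through the quotient map B(X, 𝔄) → L^∞(X, m) (i.e. μ is nonzero on some bounded measurable function vanishing m-almost everywhere), then τ(μ) = −∞ and inf over φ ∈ B(X, 𝔄) of ( λ(φ) − μ[φ] ) = −∞. -/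
open MeasureTheory Filter
open scoped ENNReal NNReal

noncomputable section

/-- `f` belongs to `B(X, 𝔄)`: it is measurable and bounded. -/
def IsBddMeas {X : Type*} [MeasurableSpace X] (f : X → ℝ) : Prop :=
  Measurable f ∧ ∃ C : ℝ, ∀ x, |f x| ≤ C

/-- `μ` represents a continuous linear functional on the Banach space `B(X, 𝔄)` of bounded
measurable functions with the supremum norm: it is additive, homogeneous, and bounded with
respect to the supremum norm on `B(X, 𝔄)`. -/
def IsBFunctional {X : Type*} [MeasurableSpace X] (μ : (X → ℝ) → ℝ) : Prop :=
  (∀ f g : X → ℝ, IsBddMeas f → IsBddMeas g → μ (f + g) = μ f + μ g) ∧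
  (∀ (c : ℝ) (f : X → ℝ), IsBddMeas f → μ (c • f) = c * μ f) ∧
  ∃ K : ℝ, ∀ f : X → ℝ, IsBddMeas f → |μ f| ≤ K * (⨆ x, |f x|)

/-- A measurable partition of unity on `X` made of nonnegative functions in `B(X, 𝔄)`
summing to `1`. -/
structure BPartUnity (X : Type*) [MeasurableSpace X] where
  k : ℕ
  g : Fin k → X → ℝ
  meas : ∀ i, Measurable (g i)
  nonneg : ∀ i x, 0 ≤ g i x
  sum_one : ∀ x, ∑ i, g i x = 1

/-- `μ ∈ M_α(X, 𝔄)`: a positive normalized `α`-invariant continuous linear functional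
on `B(X, 𝔄)`. -/
def MemMalphaB {X : Type*} [MeasurableSpace X] (α : X → X) (μ : (X → ℝ) → ℝ) : Prop :=
  IsBFunctional μ ∧ (∀ f : X → ℝ, IsBddMeas f → (∀ x, 0 ≤ f x) → 0 ≤ μ f) ∧
  μ (fun _ => 1) = 1 ∧ ∀ f : X → ℝ, IsBddMeas f → μ (f ∘ α) = μ f

def tauNB {X : Type*} [MeasurableSpace X] (m : Measure X) (α : X → X)
    (μ : (X → ℝ) → ℝ) (n : ℕ) (D : BPartUnity X) : EReal :=
  sSup {r : EReal | ∃ f : X → ℝ, Integrable f m ∧ (∫ x, |f x| ∂m) = 1 ∧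
    r = ∑ i, entTerm (μ (D.g i)) (∫ x, D.g i x * |f (α^[n] x)| ∂m)}

def tEntropyB {X : Type*} [MeasurableSpace X] (m : Measure X) (α : X → X)
    (μ : (X → ℝ) → ℝ) : EReal :=
  ⨅ (n : ℕ) (_ : 0 < n) (D : BPartUnity X), (((n : ℝ)⁻¹ : ℝ) : EReal) * tauNB m α μ n D

/-- The t-entropy on the dual of `B(X, 𝔄)`, extended by `-∞` outside `M_α(X, 𝔄)`. -/
def tEntropyBExt {X : Type*} [MeasurableSpace X] (m : Measure X) (α : X → X)
    (μ : (X → ℝ) → ℝ) : EReal :=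
  @ite _ (MemMalphaB α μ) (Classical.dec _) (tEntropyB m α μ) ⊥

/-! A bounded function `φ₀` that vanishes almost everywhere lives on a null set `A`. If `μ` is
positive, then `|μ φ₀| ≤ C * μ 1_A`, so `μ 1_A ≠ 0`; every integral over `A` vanishes, hence the
partition `{1_A, 1_Aᶜ}` contributes a summand `μ 1_A * ln 0 = -∞` and `τ μ = -∞`. On the other
hand, `λ` depends only on the almost everywhere class of the weight, so `λ (t • φ₀) = λ 0` for
all `t`, whereas `μ (t • φ₀) = t * μ φ₀` is unbounded above. -/

section BoundedFunctionals

variable {X : Type*} [MeasurableSpace X] {f g : X → ℝ} {μ : (X → ℝ) → ℝ}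

/-- Positivity of a functional on `B(X, 𝔄)`, the second clause of `MemMalphaB`; it lets
inequalities between functions be transported to their values. -/
def IsBPositive (μ : (X → ℝ) → ℝ) : Prop :=
  ∀ f : X → ℝ, IsBddMeas f → (∀ x, 0 ≤ f x) → 0 ≤ μ f

lemma IsBddMeas.const_smul (hf : IsBddMeas f) (c : ℝ) : IsBddMeas (c • f) := by
  obtain ⟨hfm, C, hC⟩ := hf
  refine ⟨hfm.const_smul c, |c| * C, fun x => ?_⟩
  calc |(c • f) x| = |c| * |f x| := abs_mul c (f x)
    _ ≤ |c| * C := by gcongr; exact hC x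

lemma IsBddMeas.neg (hf : IsBddMeas f) : IsBddMeas (-f) := by
  simpa using hf.const_smul (-1)

lemma IsBddMeas.add (hf : IsBddMeas f) (hg : IsBddMeas g) : IsBddMeas (f + g) := by
  obtain ⟨hfm, C, hC⟩ := hf
  obtain ⟨hgm, K, hK⟩ := hg
  exact ⟨hfm.add hgm, C + K, fun x => (abs_add_le _ _).trans (add_le_add (hC x) (hK x))⟩

lemma isBddMeas_indicator_one {A : Set X} (hA : MeasurableSet A) :
    IsBddMeas (A.indicator (1 : X → ℝ)) := by
  refine ⟨measurable_one.indicator hA, 1, fun x => ?_⟩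
  by_cases hx : x ∈ A <;> simp [hx]

lemma IsBFunctional.map_neg (hμ : IsBFunctional μ) (hf : IsBddMeas f) : μ (-f) = -μ f := by
  simpa using hμ.2.1 (-1) f hf

lemma IsBFunctional.map_le_map (hμ : IsBFunctional μ) (hpos : IsBPositive μ)
    (hf : IsBddMeas f) (hg : IsBddMeas g) (hfg : f ≤ g) : μ f ≤ μ g := by
  have hdiff : 0 ≤ μ (g + -f) :=
    hpos _ (hg.add hf.neg) fun x => by simpa using hfg x
  rw [hμ.1 g (-f) hg hf.neg, hμ.map_neg hf] at hdiff
  linarith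

lemma IsBFunctional.abs_map_le_of_abs_le (hμ : IsBFunctional μ) (hpos : IsBPositive μ)
    (hf : IsBddMeas f) (hg : IsBddMeas g) (hfg : |f| ≤ g) : |μ f| ≤ μ g := by
  obtain ⟨hle, hneg⟩ := abs_le'.1 hfg
  refine abs_le'.2 ⟨hμ.map_le_map hpos hf hg hle, ?_⟩
  rw [← hμ.map_neg hf]
  exact hμ.map_le_map hpos hf.neg hg hneg

lemma IsBFunctional.map_indicator_support_ne_zero (hμ : IsBFunctional μ)
    (hpos : IsBPositive μ) (hf : IsBddMeas f) (hμf : μ f ≠ 0) :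
    μ ((Function.support f).indicator 1) ≠ 0 := by
  obtain ⟨C, hC⟩ := hf.2
  have hind : IsBddMeas ((Function.support f).indicator (1 : X → ℝ)) :=
    isBddMeas_indicator_one (measurableSet_support hf.1)
  have hdom : |f| ≤ C • (Function.support f).indicator (1 : X → ℝ) := by
    intro x
    by_cases hx : f x = 0
    · simp [hx]
    · simpa [hx] using hC x
  have hbound : |μ f| ≤ C * μ ((Function.support f).indicator 1) :=
    (hμ.abs_map_le_of_abs_le hpos hf (hind.const_smul C) hdom).trans_eq (hμ.2.1 C _ hind)
  intro hzero
  rw [hzero, mul_zero] at hbound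
  exact hμf (abs_nonpos_iff.1 hbound)

end BoundedFunctionals

section TEntropy

variable {X : Type*} [MeasurableSpace X] {m : Measure X} {μ : (X → ℝ) → ℝ}

/-- The two-element partition of unity `{1_A, 1_Aᶜ}` of a measurable set `A`, with `1_A` at
index `0`. It separates `A` from its complement in the t-entropy. -/
def BPartUnity.ofMeasurableSet {A : Set X} (hA : MeasurableSet A) : BPartUnity X where
  k := 2
  g := ![A.indicator 1, Aᶜ.indicator 1]
  meas := Fin.forall_fin_two.2
    ⟨measurable_one.indicator hA, measurable_one.indicator hA.compl⟩
  nonneg := Fin.forall_fin_two.2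
    ⟨Set.indicator_nonneg fun _ _ => zero_le_one, Set.indicator_nonneg fun _ _ => zero_le_one⟩
  sum_one x := by
    rw [Fin.sum_univ_two]
    exact congrFun (Set.indicator_self_add_compl A (1 : X → ℝ)) x

lemma entTerm_zero_right {a : ℝ} (ha : a ≠ 0) : entTerm a 0 = ⊥ := by
  simp [entTerm, ha]

lemma tauNB_eq_bot_of_ae_eq_zero {D : BPartUnity X} (i : Fin D.k) (hμ : μ (D.g i) ≠ 0)
    (hD : D.g i =ᵐ[m] 0) (α : X → X) (n : ℕ) : tauNB m α μ n D = ⊥ := by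
  refine sSup_eq_bot.2 ?_
  rintro r ⟨f, -, -, rfl⟩
  have hint : ∫ x, D.g i x * |f (α^[n] x)| ∂m = 0 := by
    refine integral_eq_zero_of_ae ?_
    filter_upwards [hD] with x hx
    simp [hx]
  rw [← Finset.add_sum_erase _ _ (Finset.mem_univ i), hint, entTerm_zero_right hμ,
    EReal.bot_add]

lemma tEntropyB_eq_bot_of_tauNB_eq_bot {α : X → X} {n : ℕ} (hn : 0 < n) {D : BPartUnity X}
    (hD : tauNB m α μ n D = ⊥) : tEntropyB m α μ = ⊥ := by
  refine eq_bot_iff.2 (iInf₂_le_of_le n hn (iInf_le_of_le D ?_))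
  rw [hD, EReal.coe_mul_bot_of_pos (by positivity)]

lemma tEntropyB_eq_bot_of_ae_eq_zero (α : X → X) (hμ : IsBFunctional μ)
    (hpos : IsBPositive μ) {φ : X → ℝ} (hφ : IsBddMeas φ) (hφ_ae : φ =ᵐ[m] 0)
    (hμφ : μ φ ≠ 0) : tEntropyB m α μ = ⊥ := by
  have hnull : (Function.support φ).indicator (1 : X → ℝ) =ᵐ[m] 0 := by
    filter_upwards [hφ_ae] with x hx
    exact Set.indicator_of_notMem (Function.notMem_support.2 hx) 1
  exact tEntropyB_eq_bot_of_tauNB_eq_bot one_pos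
    (tauNB_eq_bot_of_ae_eq_zero (D := .ofMeasurableSet (measurableSet_support hφ.1))
      (0 : Fin 2) (hμ.map_indicator_support_ne_zero hpos hφ hμφ) hnull α 1)

lemma tEntropyBExt_eq_bot_of_ae_eq_zero (α : X → X) {φ : X → ℝ} (hφ : IsBddMeas φ)
    (hφ_ae : φ =ᵐ[m] 0) (hμφ : μ φ ≠ 0) : tEntropyBExt m α μ = ⊥ := by
  rw [tEntropyBExt]
  split_ifs with hM
  · exact tEntropyB_eq_bot_of_ae_eq_zero α hM.1 hM.2.1 hφ hφ_ae hμφ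
  · rfl

end TEntropy

section SpectralPotential

variable {X : Type*} [MeasurableSpace X] {m : Measure X} {α : X → X} {φ ψ : X → ℝ}

lemma ShiftBounded.quasiMeasurePreserving_s15 (h : ShiftBounded m α) (hα : Measurable α) :
    Measure.QuasiMeasurePreserving α m m := by
  obtain ⟨C, -, hC⟩ := h
  refine ⟨hα, Measure.AbsolutelyContinuous.mk fun s hs hms => ?_⟩
  rw [Measure.map_apply hα hs]
  simpa [hms] using hC s hs

lemma weightedOpNorm_congr_ae (hα : Measure.QuasiMeasurePreserving α m m) (h : φ =ᵐ[m] ψ)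
    (s k : ℕ) : weightedOpNorm m α s φ k = weightedOpNorm m α s ψ k := by
  have horbit : ∀ᵐ x ∂m, ∀ j : ℕ, φ (α^[j] x) = ψ (α^[j] x) :=
    ae_all_iff.2 fun j => (hα.iterate j).ae h
  have hint (f : X → ℝ) :
      ∫ x, Real.exp (∑ j ∈ Finset.range k, φ (α^[s * j] x)) * |f (α^[s * k] x)| ∂m =
        ∫ x, Real.exp (∑ j ∈ Finset.range k, ψ (α^[s * j] x)) * |f (α^[s * k] x)| ∂m := by
    refine integral_congr_ae ?_
    filter_upwards [horbit] with x hx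
    simp only [hx]
  simp only [weightedOpNorm, hint]

lemma spectralPotential_congr_ae (hα : Measure.QuasiMeasurePreserving α m m)
    (h : φ =ᵐ[m] ψ) : spectralPotential m α φ = spectralPotential m α ψ := by
  simp only [spectralPotential, spectralPotentialBase, weightedOpNorm_congr_ae hα h]

lemma iInf_spectralPotential_sub_eq_bot (hα : Measure.QuasiMeasurePreserving α m m)
    {μ : (X → ℝ) → ℝ} (hμ : ∀ t : ℝ, μ (t • φ) = t * μ φ) (hφ : IsBddMeas φ)
    (hφ_ae : φ =ᵐ[m] 0) (hμφ : μ φ ≠ 0) :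
    (⨅ ψ : {ψ : X → ℝ // IsBddMeas ψ},
      ((spectralPotential m α ψ.1 - μ ψ.1 : ℝ) : EReal)) = ⊥ := by
  have hline (t : ℝ) :
      spectralPotential m α (t • φ) - μ (t • φ) = spectralPotential m α 0 - t * μ φ := by
    have hnull : t • φ =ᵐ[m] 0 := by simpa using hφ_ae.const_smul t
    rw [spectralPotential_congr_ae hα hnull, hμ]
  refine EReal.eq_bot_iff_forall_lt _ |>.2 fun y => ?_
  obtain ⟨t, ht⟩ : ∃ t : ℝ, spectralPotential m α 0 - t * μ φ < y := by
    refine ⟨(spectralPotential m α 0 - (y - 1)) / μ φ, ?_⟩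
    rw [div_mul_cancel₀ _ hμφ]
    linarith
  refine (iInf_le _ ⟨t • φ, hφ.const_smul t⟩).trans_lt (EReal.coe_lt_coe_iff.2 ?_)
  exact (hline t).trans_lt ht

end SpectralPotential

/-- **Lemma 11**: if a continuous linear functional `μ` on `B(X, 𝔄)` does not factor
through `L^∞(X, m)` (i.e. it is nonzero on some bounded measurable function vanishing
`m`-almost everywhere), then `τ(μ) = −∞` and `inf_{φ ∈ B(X, 𝔄)} (λ(φ) − μ[φ]) = −∞`. -/
theorem tEntropyBExt_eq_bot_of_not_factoring
    {X : Type*} [MeasurableSpace X] (m : Measure X) (α : X → X)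
    (hα : Measurable α) (hbdd : ShiftBounded m α)
    (μ : (X → ℝ) → ℝ) (hμ : IsBFunctional μ)
    (φ₀ : X → ℝ) (h₀ : IsBddMeas φ₀) (h₀ae : φ₀ =ᵐ[m] (fun _ => (0 : ℝ)))
    (hμ₀ : μ φ₀ ≠ 0) :
    tEntropyBExt m α μ = ⊥ ∧
    (⨅ φ : {φ : X → ℝ // IsBddMeas φ},
        ((spectralPotential m α φ.1 - μ φ.1 : ℝ) : EReal)) = ⊥ :=
  ⟨tEntropyBExt_eq_bot_of_ae_eq_zero α h₀ h₀ae hμ₀,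
    iInf_spectralPotential_sub_eq_bot (hbdd.quasiMeasurePreserving_s15 hα)
      (fun t => hμ.2.1 t φ₀ h₀) h₀ h₀ae hμ₀⟩

end
end
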